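/- Let v be a norm on ℝ^n invariant under coordinate permutations, let X be an n×n positive definite Hermitian matrix, and let S be a Hermitian n×n matrix. Then the curve γ(t) := X^{1/2} e^{tS} X^{1/2} satisfies d_v(γ(s), γ(t)) = |s − t| · ‖S‖_v for all s, t ∈ ℝ; that is, γ is a geodesic for the metric d_v (up to the constant speed ‖S‖_v). -/

import Mathlib

noncomputable section
open scoped Classical
open Matrix
open scoped ComplexOrder

/-- `v(λ(H))` for Hermitian `H` (junk value `0` otherwise). -/
def vnorm {n : ℕ} (v : (Fin n → ℝ) → ℝ) (H : Matrix (Fin n) (Fin n) ℂ) : ℝ :=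
  if h : H.IsHermitian then v h.eigenvalues else 0

/-- The positive semidefinite square root of a positive semidefinite matrix
(the definition of the older Mathlib, since removed). -/
def Matrix.PosSemidef.sqrt {n 𝕜 : Type*} [Fintype n] [RCLike 𝕜] [DecidableEq n]
    {A : Matrix n n 𝕜} (hA : A.PosSemidef) : Matrix n n 𝕜 :=
  hA.1.eigenvectorUnitary.1 * Matrix.diagonal ((↑) ∘ Real.sqrt ∘ hA.1.eigenvalues) *
  (star hA.1.eigenvectorUnitary : Matrix n n 𝕜)

/-- The positive semidefinite square root (junk value `0` off PSD matrices). -/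
def matSqrt {n : ℕ} (X : Matrix (Fin n) (Fin n) ℂ) : Matrix (Fin n) (Fin n) ℂ :=
  if h : X.PosSemidef then h.sqrt else 0

/-- The Hermitian logarithm of a positive definite matrix, via the spectral
decomposition (junk value `0` off Hermitian matrices). -/
def mlog {n : ℕ} (X : Matrix (Fin n) (Fin n) ℂ) : Matrix (Fin n) (Fin n) ℂ :=
  if h : X.IsHermitian then
    (h.eigenvectorUnitary : Matrix (Fin n) (Fin n) ℂ) *
      Matrix.diagonal (fun i => (Real.log (h.eigenvalues i) : ℂ)) *
      (star h.eigenvectorUnitary : Matrix (Fin n) (Fin n) ℂ)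
  else 0

/-- The invariant Finsler distance `d_v(X,Y) = ‖log (X^{-1/2} Y X^{-1/2})‖_v`. -/
def dv {n : ℕ} (v : (Fin n → ℝ) → ℝ) (X Y : Matrix (Fin n) (Fin n) ℂ) : ℝ :=
  vnorm v (mlog ((matSqrt X)⁻¹ * Y * (matSqrt X)⁻¹))

/-!
The metric is invariant under congruence, `d_v(CXCᴴ, CYCᴴ) = d_v(X, Y)`, because `d_v(X, Y)` depends
only on the spectrum of `X⁻¹Y`. It therefore suffices to treat the curve `e^{tS}`. With
`E = e^{sS/2}` we have `e^{sS} = E 1 Eᴴ` and `e^{tS} = E e^{(t-s)S} Eᴴ`, so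
`d_v(e^{sS}, e^{tS}) = d_v(1, e^{(t-s)S}) = ‖(t-s)S‖_v`.
-/

theorem exists_equiv_comp_eq_of_map_univ_val_eq {α β γ : Type*} [Fintype α] [Fintype β]
    {f : α → γ} {g : β → γ} (h : Finset.univ.val.map f = Finset.univ.val.map g) :
    ∃ e : α ≃ β, g ∘ e = f := by
  have fiber_equiv (c : γ) : Nonempty ({a // f a = c} ≃ {b // g b = c}) := by
    have hcount := congrArg (Multiset.count c) h
    simp only [Multiset.count_map, eq_comm (a := c)] at hcount
    rw [← Fintype.card_eq, Fintype.card_subtype, Fintype.card_subtype]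
    exact hcount
  exact ⟨Equiv.ofFiberEquiv fun c => (fiber_equiv c).some, funext (Equiv.ofFiberEquiv_map _)⟩

section Spectral

variable {m 𝕜 : Type*} [Fintype m] [DecidableEq m] [RCLike 𝕜]

theorem exists_perm_eigenvalues_cfc_eq_comp {A : Matrix m m 𝕜} (hA : A.IsHermitian) (f : ℝ → ℝ)
    (hfA : (cfc f A).IsHermitian) :
    ∃ σ : Equiv.Perm m, hfA.eigenvalues = (f ∘ hA.eigenvalues) ∘ σ := by
  have roots_eq : Finset.univ.val.map (RCLike.ofReal (K := 𝕜) ∘ hfA.eigenvalues) =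
      Finset.univ.val.map (RCLike.ofReal (K := 𝕜) ∘ f ∘ hA.eigenvalues) := by
    rw [← hfA.roots_charpoly_eq_eigenvalues, hA.charpoly_cfc_eq, Polynomial.roots_prod]
    · simp
    · simp [Finset.prod_ne_zero_iff, Polynomial.X_sub_C_ne_zero]
  obtain ⟨σ, hσ⟩ := exists_equiv_comp_eq_of_map_univ_val_eq roots_eq
  exact ⟨σ, funext fun i => RCLike.ofReal_injective (K := 𝕜) (congrFun hσ i).symm⟩

theorem charpoly_cfc_congr {A B : Matrix m m 𝕜} (hA : A.IsHermitian) (hB : B.IsHermitian)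
    (h : A.charpoly = B.charpoly) (f : ℝ → ℝ) : (cfc f A).charpoly = (cfc f B).charpoly := by
  rw [hA.charpoly_cfc_eq, hB.charpoly_cfc_eq, (hA.eigenvalues_eq_eigenvalues_iff hB).mpr h]

theorem exp_smul_mul_exp_smul (S : Matrix m m 𝕜) (a b : ℝ) :
    NormedSpace.exp (a • S) * NormedSpace.exp (b • S) = NormedSpace.exp ((a + b) • S) := by
  rw [add_smul, Matrix.exp_add_of_commute]
  exact ((Commute.refl S).smul_left a).smul_right b

theorem isHermitian_exp_smul {S : Matrix m m 𝕜} (hS : S.IsHermitian) (r : ℝ) :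
    (NormedSpace.exp (r • S)).IsHermitian :=
  (hS.smul (IsSelfAdjoint.all r)).exp

theorem posSemidef_exp_smul {S : Matrix m m 𝕜} (hS : S.IsHermitian) (r : ℝ) :
    (NormedSpace.exp (r • S)).PosSemidef := by
  simpa only [(isHermitian_exp_smul hS (r / 2)).eq, exp_smul_mul_exp_smul, add_halves] using
    Matrix.posSemidef_self_mul_conjTranspose (NormedSpace.exp ((r / 2) • S))

end Spectral

section Functions

variable {n : ℕ} {X H : Matrix (Fin n) (Fin n) ℂ}

theorem matSqrt_eq_cfc (hX : X.PosSemidef) : matSqrt X = cfc Real.sqrt X := by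
  rw [matSqrt, dif_pos hX, hX.1.cfc_eq]
  rfl

theorem mlog_eq_cfc (hX : X.IsHermitian) : mlog X = cfc Real.log X := by
  rw [mlog, dif_pos hX, hX.cfc_eq]
  rfl

theorem isHermitian_matSqrt (X : Matrix (Fin n) (Fin n) ℂ) : (matSqrt X).IsHermitian := by
  by_cases hX : X.PosSemidef
  · rw [matSqrt_eq_cfc hX]
    exact cfc_predicate Real.sqrt X
  · rw [matSqrt, dif_neg hX]
    exact Matrix.isHermitian_zero

theorem matSqrt_mul_self (hX : X.PosSemidef) : matSqrt X * matSqrt X = X := by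
  have sqrt_mul_sqrt : (spectrum ℝ X).EqOn (fun x => √x * √x) id := by
    rw [hX.1.spectrum_real_eq_range_eigenvalues]
    rintro _ ⟨i, rfl⟩
    exact Real.mul_self_sqrt (hX.eigenvalues_nonneg i)
  rw [matSqrt_eq_cfc hX, ← cfc_mul Real.sqrt Real.sqrt X, cfc_congr sqrt_mul_sqrt,
    cfc_id ℝ X hX.1.isSelfAdjoint]

theorem matSqrt_one : matSqrt (1 : Matrix (Fin n) (Fin n) ℂ) = 1 := by
  rw [matSqrt_eq_cfc Matrix.PosSemidef.one, cfc_apply_one, Real.sqrt_one, map_one]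

theorem isUnit_matSqrt (hX : X.PosDef) : IsUnit (matSqrt X) :=
  isUnit_of_mul_isUnit_left ((matSqrt_mul_self hX.posSemidef).symm ▸ hX.isUnit)

open scoped Matrix.Norms.L2Operator in
theorem mlog_exp (hH : H.IsHermitian) : mlog (NormedSpace.exp H) = H := by
  rw [mlog_eq_cfc hH.exp]
  exact CFC.log_exp H hH

end Functions

section Norm

variable {n : ℕ} {v : (Fin n → ℝ) → ℝ} {H Z W : Matrix (Fin n) (Fin n) ℂ}

theorem vnorm_of_isHermitian (hH : H.IsHermitian) : vnorm v H = v hH.eigenvalues :=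
  dif_pos hH

theorem vnorm_smul (hv_smul : ∀ (c : ℝ) (x : Fin n → ℝ), v (c • x) = |c| * v x)
    (hv_perm : ∀ (σ : Equiv.Perm (Fin n)) (x : Fin n → ℝ), v (x ∘ σ) = v x)
    (hH : H.IsHermitian) (r : ℝ) : vnorm v (r • H) = |r| * vnorm v H := by
  rw [← cfc_const_mul_id r H hH.isSelfAdjoint]
  have hrH : (cfc (r * ·) H).IsHermitian := cfc_predicate (r * ·) H
  obtain ⟨σ, hσ⟩ := exists_perm_eigenvalues_cfc_eq_comp hH (r * ·) hrH
  rw [vnorm_of_isHermitian hrH, vnorm_of_isHermitian hH, hσ, hv_perm, ← hv_smul]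
  rfl

theorem vnorm_mlog_congr (hZ : Z.IsHermitian) (hW : W.IsHermitian)
    (h : Z.charpoly = W.charpoly) : vnorm v (mlog Z) = vnorm v (mlog W) := by
  have hlogZ : (cfc Real.log Z).IsHermitian := cfc_predicate Real.log Z
  have hlogW : (cfc Real.log W).IsHermitian := cfc_predicate Real.log W
  rw [mlog_eq_cfc hZ, mlog_eq_cfc hW, vnorm_of_isHermitian hlogZ, vnorm_of_isHermitian hlogW,
    (hlogZ.eigenvalues_eq_eigenvalues_iff hlogW).mpr (charpoly_cfc_congr hZ hW h Real.log)]

end Norm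

section Distance

variable {n : ℕ} {v : (Fin n → ℝ) → ℝ} {X X' Y Y' C S : Matrix (Fin n) (Fin n) ℂ}

theorem isHermitian_inv_matSqrt_mul_mul (X : Matrix (Fin n) (Fin n) ℂ) (hY : Y.IsHermitian) :
    ((matSqrt X)⁻¹ * Y * (matSqrt X)⁻¹).IsHermitian := by
  simpa only [(isHermitian_matSqrt X).inv.eq] using
    Matrix.isHermitian_mul_mul_conjTranspose (matSqrt X)⁻¹ hY

theorem charpoly_inv_matSqrt_mul_mul (hX : X.PosSemidef) (Y : Matrix (Fin n) (Fin n) ℂ) :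
    ((matSqrt X)⁻¹ * Y * (matSqrt X)⁻¹).charpoly = (X⁻¹ * Y).charpoly := by
  rw [Matrix.charpoly_mul_comm, ← mul_assoc, ← Matrix.mul_inv_rev, matSqrt_mul_self hX]

theorem dv_congr (hX : X.PosSemidef) (hY : Y.IsHermitian) (hX' : X'.PosSemidef)
    (hY' : Y'.IsHermitian) (h : (X⁻¹ * Y).charpoly = (X'⁻¹ * Y').charpoly) :
    dv v X Y = dv v X' Y' := by
  refine vnorm_mlog_congr (isHermitian_inv_matSqrt_mul_mul X hY)
    (isHermitian_inv_matSqrt_mul_mul X' hY') ?_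
  rw [charpoly_inv_matSqrt_mul_mul hX, charpoly_inv_matSqrt_mul_mul hX', h]

theorem dv_mul_mul_conjTranspose (hX : X.PosSemidef) (hY : Y.IsHermitian) (hC : IsUnit C) :
    dv v (C * X * Cᴴ) (C * Y * Cᴴ) = dv v X Y := by
  refine dv_congr (hX.mul_mul_conjTranspose_same C) (Matrix.isHermitian_mul_mul_conjTranspose C hY)
    hX hY ?_
  have hCdet : IsUnit C.det := (Matrix.isUnit_iff_isUnit_det C).mp hC
  have hCHdet : IsUnit Cᴴ.det := (Matrix.isUnit_iff_isUnit_det Cᴴ).mp hC.star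
  calc ((C * X * Cᴴ)⁻¹ * (C * Y * Cᴴ)).charpoly
      = (Cᴴ⁻¹ * (X⁻¹ * Y) * Cᴴ).charpoly := by
        simp only [Matrix.mul_inv_rev, mul_assoc, Matrix.nonsing_inv_mul_cancel_left C _ hCdet]
    _ = (X⁻¹ * Y).charpoly := by
        rw [Matrix.charpoly_mul_comm, Matrix.mul_nonsing_inv_cancel_left Cᴴ _ hCHdet]

theorem dv_one_exp (hS : S.IsHermitian) : dv v 1 (NormedSpace.exp S) = vnorm v S := by
  rw [dv, matSqrt_one, inv_one, one_mul, mul_one, mlog_exp hS]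

theorem dv_exp_smul_exp_smul (hS : S.IsHermitian) (s t : ℝ) :
    dv v (NormedSpace.exp (s • S)) (NormedSpace.exp (t • S)) = vnorm v ((t - s) • S) := by
  let E := NormedSpace.exp ((s / 2) • S)
  have hE : Eᴴ = E := isHermitian_exp_smul hS (s / 2)
  have exp_s : NormedSpace.exp (s • S) = E * 1 * Eᴴ := by
    rw [hE, mul_one, exp_smul_mul_exp_smul, add_halves]
  have exp_t : NormedSpace.exp (t • S) = E * NormedSpace.exp ((t - s) • S) * Eᴴ := by
    rw [hE, exp_smul_mul_exp_smul, exp_smul_mul_exp_smul,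
      show s / 2 + (t - s) + s / 2 = t by ring]
  rw [exp_s, exp_t, dv_mul_mul_conjTranspose Matrix.PosSemidef.one
    (isHermitian_exp_smul hS (t - s)) (Matrix.isUnit_exp _),
    dv_one_exp (hS.smul (IsSelfAdjoint.all (t - s)))]

end Distance

theorem exp_curve_is_geodesic_general {n : ℕ} (v : (Fin n → ℝ) → ℝ)
    (hv_smul : ∀ (c : ℝ) (x : Fin n → ℝ), v (c • x) = |c| * v x)
    (hv_perm : ∀ (σ : Equiv.Perm (Fin n)) (x : Fin n → ℝ), v (x ∘ σ) = v x)
    (C S : Matrix (Fin n) (Fin n) ℂ) (hC : IsUnit C) (hS : S.IsHermitian) (s t : ℝ) :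
    dv v (C * NormedSpace.exp (s • S) * Cᴴ) (C * NormedSpace.exp (t • S) * Cᴴ)
      = |s - t| * vnorm v S := by
  rw [dv_mul_mul_conjTranspose (posSemidef_exp_smul hS s) (isHermitian_exp_smul hS t) hC,
    dv_exp_smul_exp_smul hS, vnorm_smul hv_smul hv_perm hS, abs_sub_comm]

/-- The curve `t ↦ X^{1/2} e^{tS} X^{1/2}` is a constant-speed geodesic for `d_v`:
`d_v(γ(s), γ(t)) = |s - t| ⬝ ‖S‖_v`. -/
theorem exp_curve_is_geodesic {n : ℕ} (v : (Fin n → ℝ) → ℝ)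
    (hv_eq0 : ∀ x, v x = 0 ↔ x = 0)
    (hv_smul : ∀ (c : ℝ) (x : Fin n → ℝ), v (c • x) = |c| * v x)
    (hv_add : ∀ x y, v (x + y) ≤ v x + v y)
    (hv_perm : ∀ (σ : Equiv.Perm (Fin n)) (x : Fin n → ℝ), v (x ∘ σ) = v x)
    (X S : Matrix (Fin n) (Fin n) ℂ) (hX : X.PosDef) (hS : S.IsHermitian)
    (s t : ℝ) :
    dv v (matSqrt X * NormedSpace.exp (s • S) * matSqrt X)
        (matSqrt X * NormedSpace.exp (t • S) * matSqrt X)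
      = |s - t| * vnorm v S := by
  simpa only [(isHermitian_matSqrt X).eq] using
    exp_curve_is_geodesic_general v hv_smul hv_perm (matSqrt X) S (isUnit_matSqrt hX) hS s t
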